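/- arXiv:2401.11786 — 2 statements merged into one kernel-verified Lean document; each statement's English description precedes it below -/
import Mathlib

section
/- Suppose λ₁ ≤ ρ_q < λ₁ + (λ₂−λ₁)/(2+χ_P), where χ_P = (8λ₂/λ₁)·(ξ_max/ξ_min)·((λ₂+λ₁)/(2(λ₂−λ₁)))^{1/2}. Then for all y ∈ Y, the Hessian of φ satisfies the Loewner-order bounds μ_P P ⪯ ∇²φ(y) ⪯ L_P P, where ∇²φ(y) = (2/(yᵀy+1))·(B − φ(y)I − y(∇φ(y))ᵀ − ∇φ(y)yᵀ), ∇φ(y) = (2/(yᵀy+1))·(By − φ(y)y + b), μ_P = 2ξ_min·(1 − 4(ρ_q−λ₁)/(λ₂−λ₁))·(1 − λ₁/λ₂ − (2+χ_P)(ρ_q−λ₁)/λ₂) > 0, and L_P = 2ξ_max·(1 − λ₁/λₙ + (χ_P/λ₂)(ξ_min/ξ_max)(ρ_q−λ₁)). -/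
open Matrix

noncomputable def Mnorm {n : ℕ} (M : Matrix (Fin n) (Fin n) ℝ) (x : Fin n → ℝ) : ℝ :=
  Real.sqrt (x ⬝ᵥ (M *ᵥ x))

noncomputable def Rq {n : ℕ} (A M : Matrix (Fin n) (Fin n) ℝ) (x : Fin n → ℝ) : ℝ :=
  (x ⬝ᵥ (A *ᵥ x)) / (x ⬝ᵥ (M *ᵥ x))

/-- ψ(x) = QᵀMx / (qᵀMx) -/
noncomputable def psiMap {n m : ℕ} (M : Matrix (Fin n) (Fin n) ℝ) (q : Fin n → ℝ)
    (Q : Matrix (Fin n) (Fin m) ℝ) (x : Fin n → ℝ) : Fin m → ℝ :=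
  (q ⬝ᵥ (M *ᵥ x))⁻¹ • ((Qᵀ * M) *ᵥ x)

/-- ψ†(y) = (Qy + q)/‖Qy + q‖_M -/
noncomputable def psiDag {n m : ℕ} (M : Matrix (Fin n) (Fin n) ℝ) (q : Fin n → ℝ)
    (Q : Matrix (Fin n) (Fin m) ℝ) (y : Fin m → ℝ) : Fin n → ℝ :=
  (Mnorm M (Q *ᵥ y + q))⁻¹ • (Q *ᵥ y + q)

/-- The hemisphere S₊ = {x : ‖x‖_M = 1, qᵀMx > 0}. -/
def Splus {n : ℕ} (M : Matrix (Fin n) (Fin n) ℝ) (q : Fin n → ℝ) : Set (Fin n → ℝ) :=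
  {x | Mnorm M x = 1 ∧ 0 < q ⬝ᵥ (M *ᵥ x)}

/-- X = {x ∈ S₊ : Rq(x) ≤ Rq(q)}. -/
def Xset {n : ℕ} (A M : Matrix (Fin n) (Fin n) ℝ) (q : Fin n → ℝ) : Set (Fin n → ℝ) :=
  {x | x ∈ Splus M q ∧ Rq A M x ≤ Rq A M q}

/-- φ(y) = (yᵀBy + 2yᵀb + ρ)/(yᵀy + 1). -/
noncomputable def phiAux {m : ℕ} (B : Matrix (Fin m) (Fin m) ℝ) (b : Fin m → ℝ) (ρ : ℝ)
    (y : Fin m → ℝ) : ℝ :=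
  (y ⬝ᵥ (B *ᵥ y) + 2 * (y ⬝ᵥ b) + ρ) / (y ⬝ᵥ y + 1)

/-- ∇φ(y) = (2/(yᵀy+1))(By − φ(y)y + b). -/
noncomputable def gradPhi {m : ℕ} (B : Matrix (Fin m) (Fin m) ℝ) (b : Fin m → ℝ) (ρ : ℝ)
    (y : Fin m → ℝ) : Fin m → ℝ :=
  (2 / (y ⬝ᵥ y + 1)) • (B *ᵥ y - phiAux B b ρ y • y + b)

/-- ∇²φ(y) = (2/(yᵀy+1))(B − φ(y)I − y∇φ(y)ᵀ − ∇φ(y)yᵀ). -/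
noncomputable def hessPhi {m : ℕ} (B : Matrix (Fin m) (Fin m) ℝ) (b : Fin m → ℝ) (ρ : ℝ)
    (y : Fin m → ℝ) : Matrix (Fin m) (Fin m) ℝ :=
  (2 / (y ⬝ᵥ y + 1)) •
    (B - phiAux B b ρ y • (1 : Matrix (Fin m) (Fin m) ℝ)
      - vecMulVec y (gradPhi B b ρ y) - vecMulVec (gradPhi B b ρ y) y)

lemma aux_pencil {m : ℕ} (B P : Matrix (Fin (m+1)) (Fin (m+1)) ℝ) (hB : B.IsHermitian)
    (hP : P.PosDef) : ∃ t : ℝ, ∃ v : Fin (m+1) → ℝ, v ≠ 0 ∧ B *ᵥ v = t • (P *ᵥ v) ∧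
      ∀ w, t * (w ⬝ᵥ (P *ᵥ w)) ≤ w ⬝ᵥ (B *ᵥ w) := by
  have hpos : ∀ w : Fin (m+1) → ℝ, w ≠ 0 → 0 < w ⬝ᵥ (P *ᵥ w) := by
    intro w hw
    simpa using hP.dotProduct_mulVec_pos hw
  have hcomp : IsCompact (Metric.sphere (0 : Fin (m+1) → ℝ) 1) := isCompact_sphere _ _
  have hne : (Metric.sphere (0 : Fin (m+1) → ℝ) 1).Nonempty :=
    NormedSpace.sphere_nonempty.mpr zero_le_one
  have hcont : ContinuousOn (fun w : Fin (m+1) → ℝ => (w ⬝ᵥ (B *ᵥ w)) / (w ⬝ᵥ (P *ᵥ w)))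
      (Metric.sphere (0 : Fin (m+1) → ℝ) 1) := by
    apply ContinuousOn.div
    · apply Continuous.continuousOn
      fun_prop
    · apply Continuous.continuousOn
      fun_prop
    · intro w hw
      have : w ≠ 0 := by
        rintro rfl
        simp at hw
      exact (hpos w this).ne'
  obtain ⟨v, hv, hmin⟩ := hcomp.exists_isMinOn hne hcont
  have hv0 : v ≠ 0 := by
    rintro rfl
    simp at hv
  set t := (v ⬝ᵥ (B *ᵥ v)) / (v ⬝ᵥ (P *ᵥ v)) with ht
  have hall : ∀ w, t * (w ⬝ᵥ (P *ᵥ w)) ≤ w ⬝ᵥ (B *ᵥ w) := by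
    intro w
    by_cases hw : w = 0
    · simp [hw]
    · have hn : 0 < ‖w‖ := norm_pos_iff.mpr hw
      have h1 := hmin (show ‖w‖⁻¹ • w ∈ Metric.sphere (0 : Fin (m+1) → ℝ) 1 by
        simp [norm_smul, hn.ne'])
      simp only [Set.mem_ofPred_eq, mulVec_smul, dotProduct_smul, smul_dotProduct, smul_eq_mul] at h1
      rw [mul_div_mul_left _ _ (inv_pos.mpr hn).ne', mul_div_mul_left _ _ (inv_pos.mpr hn).ne',
        le_div_iff₀ (hpos w hw)] at h1
      exact h1
  refine ⟨t, v, hv0, ?_, hall⟩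
  have hpsd : (B - t • P).PosSemidef := by
    apply PosSemidef.of_dotProduct_mulVec_nonneg
    · apply IsHermitian.sub hB
      have h2 := hP.isHermitian
      unfold IsHermitian at *
      rw [conjTranspose_smul, h2]; simp
    · intro x
      simp only [star_trivial, sub_mulVec, smul_mulVec, dotProduct_sub, dotProduct_smul, smul_eq_mul]
      linarith [hall x]
  have hz := (hpsd.dotProduct_mulVec_zero_iff v).mp (by
    simp only [star_trivial, sub_mulVec, smul_mulVec, dotProduct_sub, dotProduct_smul, smul_eq_mul]
    rw [ht, div_mul_cancel₀ _ (hpos v hv0).ne']; simp)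
  rw [sub_mulVec, smul_mulVec] at hz
  exact sub_eq_zero.mp hz

lemma aux_proj0 {n : ℕ} (lam x : Fin (n+2) → ℝ) (hmono : Monotone lam) :
    lam 0 * x 0 ^ 2 + lam 1 * (∑ i, x i ^ 2 - x 0 ^ 2) ≤ ∑ i, lam i * x i ^ 2 := by
  rw [Fin.sum_univ_succ, Fin.sum_univ_succ (fun i => lam i * x i ^ 2)]
  have : lam 1 * ∑ i : Fin (n+1), x i.succ ^ 2 ≤ ∑ i : Fin (n+1), lam i.succ * x i.succ ^ 2 := by
    rw [Finset.mul_sum]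
    apply Finset.sum_le_sum
    intro i _
    apply mul_le_mul_of_nonneg_right _ (sq_nonneg _)
    apply hmono
    rw [Fin.le_def]
    simp
  linarith

lemma aux_tail {n : ℕ} (x z : Fin (n+2) → ℝ) :
    (∑ i, x i * z i - x 0 * z 0) ^ 2 ≤
      (∑ i, x i ^ 2 - x 0 ^ 2) * (∑ i, z i ^ 2 - z 0 ^ 2) := by
  rw [Fin.sum_univ_succ, Fin.sum_univ_succ (fun i => x i ^ 2), Fin.sum_univ_succ (fun i => z i ^ 2)]
  have := Finset.sum_mul_sq_le_sq_mul_sq Finset.univ (fun i : Fin (n+1) => x i.succ)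
    (fun i : Fin (n+1) => z i.succ)
  simpa using this

/-- lower bound for the compression -/
lemma aux_low {n : ℕ} (lam a c : Fin (n+2) → ℝ) (hmono : Monotone lam)
    (hac : ∑ i, a i * c i = 0) (hc : ∑ i, c i ^ 2 = 1) (ρ : ℝ)
    (hρ : ∑ i, lam i * c i ^ 2 = ρ) :
    (lam 0 + lam 1 - ρ) * ∑ i, a i ^ 2 ≤ ∑ i, lam i * a i ^ 2 := by
  have h1 := aux_proj0 lam a hmono
  have h2 := aux_proj0 lam c hmono
  have h3 := aux_tail a c
  rw [hac, hc] at h3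
  rw [hc, hρ] at h2
  set s := ∑ i, a i ^ 2 with hs
  have hs0 : 0 ≤ s := Finset.sum_nonneg (fun i _ => sq_nonneg _)
  have hl : lam 0 ≤ lam 1 := hmono (by simp)
  have h4 : a 0 ^ 2 + s * c 0 ^ 2 ≤ s := by nlinarith
  nlinarith

lemma aux_up {n : ℕ} (lam a : Fin (n+2) → ℝ) (hmono : Monotone lam) :
    ∑ i, lam i * a i ^ 2 ≤ lam (Fin.last (n+1)) * ∑ i, a i ^ 2 := by
  rw [Finset.mul_sum]
  exact Finset.sum_le_sum fun i _ =>
    mul_le_mul_of_nonneg_right (hmono (Fin.le_last i)) (sq_nonneg _)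

lemma aux_lo0 {n : ℕ} (lam a : Fin (n+2) → ℝ) (hmono : Monotone lam) :
    lam 0 * ∑ i, a i ^ 2 ≤ ∑ i, lam i * a i ^ 2 := by
  rw [Finset.mul_sum]
  exact Finset.sum_le_sum fun i _ =>
    mul_le_mul_of_nonneg_right (hmono (Fin.zero_le i)) (sq_nonneg _)

/-- residual bound -/
lemma aux_res {n : ℕ} (lam a x : Fin (n+2) → ℝ) (hmono : Monotone lam) (h0 : 0 < lam 0)
    (φ N : ℝ) (hN : ∑ i, x i ^ 2 = N) (hφ : ∑ i, lam i * x i ^ 2 = φ * N) :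
    (∑ i, (lam i - φ) * a i * x i) ^ 2 ≤
      (∑ i, lam i * a i ^ 2) * (N * φ * (φ - lam 0) / lam 0) := by
  have hl : ∀ i, 0 < lam i := fun i => h0.trans_le (hmono (Fin.zero_le i))
  have h1 := Finset.sum_mul_sq_le_sq_mul_sq Finset.univ (fun i => √(lam i) * a i)
    (fun i => (lam i - φ) * x i / √(lam i))
  have e1 : ∀ i, √(lam i) * a i * ((lam i - φ) * x i / √(lam i)) = (lam i - φ) * a i * x i := by
    intro i
    have : √(lam i) ≠ 0 := (Real.sqrt_pos.mpr (hl i)).ne'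
    field_simp
  have e2 : ∀ i, (√(lam i) * a i) ^ 2 = lam i * a i ^ 2 := by
    intro i
    rw [mul_pow, Real.sq_sqrt (hl i).le]
  have e3 : ∀ i, ((lam i - φ) * x i / √(lam i)) ^ 2
      = lam i * x i ^ 2 - 2 * φ * x i ^ 2 + φ ^ 2 * (x i ^ 2 / lam i) := by
    intro i
    rw [div_pow, Real.sq_sqrt (hl i).le]
    have := (hl i).ne'
    field_simp
    ring
  simp only [e1, e2, e3] at h1
  refine h1.trans ?_
  apply mul_le_mul_of_nonneg_left _
    (Finset.sum_nonneg fun i _ => mul_nonneg (hl i).le (sq_nonneg _))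
  rw [Finset.sum_add_distrib, Finset.sum_sub_distrib, ← Finset.mul_sum, ← Finset.mul_sum, hφ, hN]
  have h2 : ∑ i, x i ^ 2 / lam i ≤ N / lam 0 := by
    rw [← hN, Finset.sum_div]
    exact Finset.sum_le_sum fun i _ =>
      div_le_div_of_nonneg_left (sq_nonneg _) h0 (hmono (Fin.zero_le i))
  have h3 : φ ^ 2 * ∑ i, x i ^ 2 / lam i ≤ φ ^ 2 * (N / lam 0) :=
    mul_le_mul_of_nonneg_left h2 (sq_nonneg _)
  have h4 : N * φ * (φ - lam 0) / lam 0 = φ * N - 2 * φ * N + φ ^ 2 * (N / lam 0) := by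
    field_simp
    ring
  linarith

/-- angle bound -/
lemma aux_angle {n : ℕ} (lam c x : Fin (n+2) → ℝ) (hmono : Monotone lam)
    (h01 : lam 0 < lam 1) (ρ N δ : ℝ) (hc : ∑ i, c i ^ 2 = 1) (hx : ∑ i, x i ^ 2 = N)
    (hxc : ∑ i, x i * c i = 1) (hcρ : ∑ i, lam i * c i ^ 2 ≤ ρ)
    (hxρ : ∑ i, lam i * x i ^ 2 ≤ ρ * N) (hδ : δ = (ρ - lam 0) / (lam 1 - lam 0))
    (hδ2 : δ < 1 / 4) (hN : 0 < N) (hδ0 : 0 ≤ δ) : N * (1 - 2 * δ) ^ 2 ≤ 1 := by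
  have h1 := aux_proj0 lam c hmono
  have h2 := aux_proj0 lam x hmono
  have h3 := aux_tail x c
  have h4 := aux_tail c c
  rw [hxc, hc, hx] at h3
  rw [hc] at h1
  rw [hx] at h2
  have hd : 0 < lam 1 - lam 0 := by linarith
  have hρ : ρ = lam 0 + δ * (lam 1 - lam 0) := by rw [hδ]; field_simp; ring
  have c1 : 1 - c 0 ^ 2 ≤ δ := by
    by_contra! h
    nlinarith
  have x1 : N - x 0 ^ 2 ≤ N * δ := by
    by_contra! h
    nlinarith
  have cc : 0 ≤ 1 - c 0 ^ 2 := by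
    rw [← hc, Fin.sum_univ_succ]
    simpa using Finset.sum_nonneg (fun i (_ : i ∈ Finset.univ) => sq_nonneg (c (Fin.succ i)))
  obtain ⟨S, hS0, hSN⟩ : ∃ S : ℝ, 0 < S ∧ S ^ 2 = N :=
    ⟨√N, Real.sqrt_pos.mpr hN, Real.sq_sqrt hN.le⟩
  set p := x 0 * c 0 with hp
  have r1 : (1 - p) ^ 2 ≤ (S * δ) ^ 2 := by
    have : (N - x 0 ^ 2) * (1 - c 0 ^ 2) ≤ (N * δ) * δ :=
      mul_le_mul x1 c1 cc (by positivity)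
    nlinarith
  have p1 : (S * (1 - δ)) ^ 2 ≤ p ^ 2 := by
    have : (N * (1 - δ)) * (1 - δ) ≤ x 0 ^ 2 * c 0 ^ 2 :=
      mul_le_mul (by linarith) (by linarith) (by linarith) (sq_nonneg _)
    rw [hp]
    nlinarith
  have r2 := abs_le_of_sq_le_sq r1 (by positivity)
  have p3 : S * (1 - δ) ≤ |p| := by
    have := sq_le_sq.mp p1
    rwa [abs_of_nonneg (mul_nonneg hS0.le (by linarith))] at this
  rw [abs_le] at r2
  have hfin : S * (1 - 2 * δ) ≤ 1 := by
    rcases abs_cases p with ⟨h, _⟩ | ⟨h, _⟩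
    · rw [h] at p3; nlinarith
    · rw [h] at p3; nlinarith
  rw [← hSN, ← mul_pow]
  have : 0 ≤ S * (1 - 2 * δ) := mul_nonneg hS0.le (by linarith)
  exact pow_le_one₀ this hfin

/-- scalar bound on the rank-two term -/
lemma aux_T (l0 l1 ρ φ s β Y vy vr : ℝ) (h0 : 0 < l0) (h01 : l0 < l1)
    (hρ1 : l0 ≤ ρ) (hρ2 : ρ - l0 ≤ (l1 - l0) / 4) (hφ1 : l0 ≤ φ) (hφ2 : φ ≤ ρ)
    (hs : 0 ≤ s) (hβ : 0 ≤ β) (hY : 0 ≤ Y)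
    (F1 : (l0 + l1 - ρ) * s ≤ β) (F3 : vy ^ 2 ≤ Y * s)
    (F4 : vr ^ 2 ≤ β * ((Y + 1) * φ * (φ - l0) / l0))
    (F5 : (Y + 1) * (1 - 2 * ((ρ - l0) / (l1 - l0))) ^ 2 ≤ 1) :
    |2 * vy * (2 / (Y + 1) * vr)| ≤
      8 * (ρ - l0) / l0 * √((l1 + l0) / (2 * (l1 - l0))) * β := by
  have hd : 0 < l1 - l0 := by linarith
  have hκ : 0 ≤ (l1 + l0) / (2 * (l1 - l0)) := by
    apply div_nonneg <;> linarith
  apply abs_le_of_sq_le_sq _ (by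
    have : 0 ≤ ρ - l0 := by linarith
    positivity)
  set δ := (ρ - l0) / (l1 - l0) with hδ
  have hδ0 : 0 ≤ δ := div_nonneg (by linarith) hd.le
  have hN : 0 < Y + 1 := by linarith
  have hYN : Y / (Y + 1) ≤ 4 * δ := by
    rw [div_le_iff₀ hN]
    nlinarith [mul_nonneg hN.le (sq_nonneg δ)]
  have hm : 0 < l0 + l1 - ρ := by linarith
  have hs' : s ≤ β / l0 := by
    rw [le_div_iff₀ h0]
    nlinarith
  have hφφ : φ * (φ - l0) / l0 ≤ (l1 + l0) / 2 * (ρ - l0) / l0 := by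
    apply div_le_div_of_nonneg_right _ h0.le
    apply mul_le_mul <;> linarith
  have hφφ0 : 0 ≤ φ * (φ - l0) / l0 := div_nonneg (mul_nonneg (by linarith) (by linarith)) h0.le
  calc (2 * vy * (2 / (Y + 1) * vr)) ^ 2 = 16 / (Y+1)^2 * (vy ^ 2 * vr ^ 2) := by
        field_simp; ring
    _ ≤ 16 / (Y+1)^2 * ((Y * s) * (β * ((Y + 1) * φ * (φ - l0) / l0))) := by
        gcongr
    _ = 16 * ((Y / (Y+1)) * s * β * (φ * (φ - l0) / l0)) := by field_simp
    _ ≤ 16 * ((4 * δ) * (β / l0) * β * ((l1 + l0) / 2 * (ρ - l0) / l0)) := by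
        gcongr
    _ = (8 * (ρ - l0) / l0 * √((l1 + l0) / (2 * (l1 - l0))) * β) ^ 2 := by
        rw [mul_pow, mul_pow, Real.sq_sqrt hκ, hδ]
        field_simp
        ring

lemma aux_final (l0 l1 ln ρ φ s β Y T p ξ0 ξ1 χ κ : ℝ) (h0 : 0 < l0) (h01 : l0 < l1)
    (h1n : l1 ≤ ln) (hρ1 : l0 ≤ ρ) (hφ1 : l0 ≤ φ) (hφ2 : φ ≤ ρ)
    (hs : 0 ≤ s) (hβ : 0 ≤ β) (hY : 0 ≤ Y) (hp : 0 ≤ p) (hξ0 : 0 < ξ0) (hξ1 : 0 < ξ1)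
    (F1 : (l0 + l1 - ρ) * s ≤ β) (F2 : β ≤ ln * s) (G0 : ξ0 * p ≤ β) (G1 : β ≤ ξ1 * p)
    (F5 : (Y + 1) * (1 - 2 * ((ρ - l0) / (l1 - l0))) ^ 2 ≤ 1) (hκ : 0 ≤ κ)
    (hχ : χ = 8 * l1 / l0 * (ξ1 / ξ0) * κ) (hχ4 : 4 ≤ χ)
    (hT : |T| ≤ 8 * (ρ - l0) / l0 * κ * β) (hρ2 : ρ < l0 + (l1 - l0) / (2 + χ)) :
    2 * ξ0 * (1 - 4 * (ρ - l0) / (l1 - l0)) *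
      (1 - l0 / l1 - (2 + χ) * (ρ - l0) / l1) * p ≤ 2 / (Y + 1) * (β - φ * s - T) ∧
    2 / (Y + 1) * (β - φ * s - T) ≤
      2 * ξ1 * (1 - l0 / ln + (χ / l1) * (ξ0 / ξ1) * (ρ - l0)) * p := by
  have hd : 0 < l1 - l0 := by linarith
  have hl1 : 0 < l1 := by linarith
  have hln : 0 < ln := by linarith
  have hd2 : (2 + χ) * (ρ - l0) < l1 - l0 := by
    have : ρ - l0 < (l1 - l0) / (2 + χ) := by linarith
    rw [lt_div_iff₀ (by linarith)] at this
    linarith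
  have hdd : 6 * (ρ - l0) < l1 - l0 := by nlinarith
  have hN : 0 < Y + 1 := by linarith
  have hT2 : 8 * (ρ - l0) / l0 * κ * β ≤ χ * (ρ - l0) / l1 * ξ0 * p := by
    have : χ * (ρ - l0) / l1 * ξ0 * p = 8 * (ρ - l0) / l0 * κ * (ξ1 * p) := by
      rw [hχ]; field_simp
    rw [this]
    apply mul_le_mul_of_nonneg_left G1
    have : 0 ≤ ρ - l0 := by linarith
    positivity
  obtain ⟨T1, T2⟩ := abs_le.mp (hT.trans hT2)
  constructor
  · have k1 : (1 - l0 / l1 - 2 * (ρ - l0) / l1) * β ≤ β - φ * s := by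
      have e : (1 - l0 / l1 - 2 * (ρ - l0) / l1) = (l0 + l1 - 2 * ρ) / l1 := by
        field_simp; ring
      rw [e, div_mul_eq_mul_div, div_le_iff₀ hl1]
      have h1 : φ * s ≤ ρ * s := mul_le_mul_of_nonneg_right hφ2 hs
      have h3 : (2 * ρ - l0) * β ≥ l1 * (ρ * s) := by
        -- l1 ρ s ≤ (2ρ - l0) β
        have h4 : l1 * ρ ≤ (2 * ρ - l0) * (l0 + l1 - ρ) := by nlinarith
        have h5 : (2 * ρ - l0) * ((l0 + l1 - ρ) * s) ≤ (2 * ρ - l0) * β :=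
          mul_le_mul_of_nonneg_left F1 (by linarith)
        have h6 := mul_le_mul_of_nonneg_right h4 hs
        linarith
      have h7 := mul_le_mul_of_nonneg_left h1 hl1.le
      linarith
    have k2 : (1 - l0 / l1 - 2 * (ρ - l0) / l1) * (ξ0 * p) ≤
        (1 - l0 / l1 - 2 * (ρ - l0) / l1) * β := by
      apply mul_le_mul_of_nonneg_left G0
      have e : (1 - l0 / l1 - 2 * (ρ - l0) / l1) = (l0 + l1 - 2 * ρ) / l1 := by
        field_simp; ring
      rw [e]
      exact div_nonneg (by linarith) hl1.le
    have k3 : (1 - l0 / l1 - (2 + χ) * (ρ - l0) / l1) * (ξ0 * p) ≤ β - φ * s - T := by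
      have e : (1 - l0 / l1 - (2 + χ) * (ρ - l0) / l1) * (ξ0 * p) =
        (1 - l0 / l1 - 2 * (ρ - l0) / l1) * (ξ0 * p) - χ * (ρ - l0) / l1 * ξ0 * p := by ring
      linarith
    have k4 : 0 ≤ (1 - l0 / l1 - (2 + χ) * (ρ - l0) / l1) * (ξ0 * p) := by
      apply mul_nonneg _ (by positivity)
      have e : (1 - l0 / l1 - (2 + χ) * (ρ - l0) / l1) = (l1 - l0 - (2 + χ) * (ρ - l0)) / l1 := by
        field_simp
      rw [e]
      exact div_nonneg (by linarith) hl1.le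
    have k5 : 2 * (1 - 4 * (ρ - l0) / (l1 - l0)) ≤ 2 / (Y + 1) := by
      rw [le_div_iff₀ hN]
      have e : 4 * (ρ - l0) / (l1 - l0) = 4 * ((ρ - l0) / (l1 - l0)) := by ring
      rw [e]
      have h8 := mul_nonneg hN.le (sq_nonneg ((ρ - l0) / (l1 - l0)))
      linarith
    calc _ = 2 * (1 - 4 * (ρ - l0) / (l1 - l0)) *
        ((1 - l0 / l1 - (2 + χ) * (ρ - l0) / l1) * (ξ0 * p)) := by ring
      _ ≤ 2 / (Y + 1) * ((1 - l0 / l1 - (2 + χ) * (ρ - l0) / l1) * (ξ0 * p)) :=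
        mul_le_mul_of_nonneg_right k5 k4
      _ ≤ _ := mul_le_mul_of_nonneg_left k3 (by positivity)
  · have k1 : β - φ * s ≤ (1 - l0 / ln) * β := by
      have h1 : l0 * s ≤ φ * s := mul_le_mul_of_nonneg_right hφ1 hs
      have h2 : l0 / ln * β ≤ l0 * s := by
        rw [div_mul_eq_mul_div, div_le_iff₀ hln]
        nlinarith
      linarith
    have hc : 0 ≤ 1 - l0 / ln := by
      rw [sub_nonneg, div_le_one hln]; linarith
    have k2 : (1 - l0 / ln) * β ≤ (1 - l0 / ln) * (ξ1 * p) := mul_le_mul_of_nonneg_left G1 hc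
    have k3 : β - φ * s - T ≤ ξ1 * (1 - l0 / ln + (χ / l1) * (ξ0 / ξ1) * (ρ - l0)) * p := by
      have e : ξ1 * (1 - l0 / ln + (χ / l1) * (ξ0 / ξ1) * (ρ - l0)) * p =
        (1 - l0 / ln) * (ξ1 * p) + χ * (ρ - l0) / l1 * ξ0 * p := by field_simp
      linarith
    have hR : 0 ≤ ξ1 * (1 - l0 / ln + (χ / l1) * (ξ0 / ξ1) * (ρ - l0)) * p := by
      have : 0 ≤ ρ - l0 := by linarith
      have : 0 ≤ χ := by linarith
      positivity
    calc _ ≤ 2 / (Y + 1) * (ξ1 * (1 - l0 / ln + (χ / l1) * (ξ0 / ξ1) * (ρ - l0)) * p) :=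
        mul_le_mul_of_nonneg_left k3 (by positivity)
      _ ≤ 2 * (ξ1 * (1 - l0 / ln + (χ / l1) * (ξ0 / ξ1) * (ρ - l0)) * p) := by
        apply mul_le_mul_of_nonneg_right _ hR
        rw [div_le_iff₀ hN]; linarith
      _ = _ := by ring

lemma aux_expand {n : ℕ} (M : Matrix (Fin n) (Fin n) ℝ) (u : Fin n → Fin n → ℝ)
    (horth : ∀ i j, u i ⬝ᵥ (M *ᵥ u j) = if i = j then (1:ℝ) else 0) (x : Fin n → ℝ) :
    x = ∑ i, (u i ⬝ᵥ (M *ᵥ x)) • u i := by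
  let V : Matrix (Fin n) (Fin n) ℝ := Matrix.of u
  have h1 : V * (M * Vᵀ) = 1 := by
    ext i j
    have h := horth i j
    rw [Matrix.one_apply, ← h]
    rw [Matrix.mul_apply]
    rfl
  have h2 : (M * Vᵀ) * V = 1 := mul_eq_one_comm.mp h1
  have h3 : Vᵀ * (V * M) = 1 := by
    have h4 : (V * M) * Vᵀ = 1 := by rw [Matrix.mul_assoc, h1]
    exact mul_eq_one_comm.mp h4
  have h5 : x = Vᵀ *ᵥ (V *ᵥ (M *ᵥ x)) := by
    rw [mulVec_mulVec, mulVec_mulVec, Matrix.mul_assoc, h3, one_mulVec]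
  conv_lhs => rw [h5]
  ext k
  simp only [mulVec, dotProduct, Finset.sum_apply, Pi.smul_apply, smul_eq_mul, transpose_apply, V,
    Matrix.of_apply]
  exact Finset.sum_congr rfl fun i _ => mul_comm _ _

lemma aux_coord {n : ℕ} (A M : Matrix (Fin n) (Fin n) ℝ) (lam : Fin n → ℝ)
    (u : Fin n → Fin n → ℝ) (hM : M.PosDef)
    (heig : ∀ i, A *ᵥ u i = lam i • (M *ᵥ u i))
    (horth : ∀ i j, u i ⬝ᵥ (M *ᵥ u j) = if i = j then (1:ℝ) else 0) :
    ∃ α : (Fin n → ℝ) → (Fin n → ℝ),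
      (∀ x z, x ⬝ᵥ (M *ᵥ z) = ∑ i, α x i * α z i) ∧
      (∀ x z, x ⬝ᵥ (A *ᵥ z) = ∑ i, lam i * α x i * α z i) := by
  have hsym : ∀ x z : Fin n → ℝ, x ⬝ᵥ (M *ᵥ z) = z ⬝ᵥ (M *ᵥ x) := by
    intro x z
    have h : Mᵀ = M := by simpa [IsHermitian] using hM.isHermitian
    rw [dotProduct_comm, dotProduct_mulVec z, ← mulVec_transpose, h]
  refine ⟨fun x i => u i ⬝ᵥ (M *ᵥ x), ?_, ?_⟩
  · intro x z
    conv_lhs => rw [aux_expand M u horth z]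
    rw [mulVec_sum, dotProduct_sum]
    refine Finset.sum_congr rfl fun i _ => ?_
    rw [mulVec_smul, dotProduct_smul, smul_eq_mul, hsym x (u i), mul_comm]
  · intro x z
    conv_lhs => rw [aux_expand M u horth z]
    rw [mulVec_sum, dotProduct_sum]
    refine Finset.sum_congr rfl fun i _ => ?_
    rw [mulVec_smul, dotProduct_smul, smul_eq_mul, heig, dotProduct_smul, smul_eq_mul,
      hsym x (u i)]
    ring

lemma aux_adj {n m : ℕ} (Q : Matrix (Fin n) (Fin m) ℝ) (v : Fin m → ℝ) (w : Fin n → ℝ) :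
    (Q *ᵥ v) ⬝ᵥ w = v ⬝ᵥ (Qᵀ *ᵥ w) := by
  rw [dotProduct_mulVec, vecMul_transpose]

lemma aux_complete {n : ℕ} (M : Matrix (Fin (n+2)) (Fin (n+2)) ℝ) (hM : M.PosDef)
    (q : Fin (n+2) → ℝ) (Q : Matrix (Fin (n+2)) (Fin (n+1)) ℝ)
    (hq1 : q ⬝ᵥ (M *ᵥ q) = 1) (hQMQ : Qᵀ * M * Q = 1) (hQMq : (Qᵀ * M) *ᵥ q = 0)
    (x : Fin (n+2) → ℝ) :
    x = (q ⬝ᵥ (M *ᵥ x)) • q + Q *ᵥ ((Qᵀ * M) *ᵥ x) := by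
  have hsym : ∀ x z : Fin (n+2) → ℝ, x ⬝ᵥ (M *ᵥ z) = z ⬝ᵥ (M *ᵥ x) := by
    intro x z
    have h : Mᵀ = M := by simpa [IsHermitian] using hM.isHermitian
    rw [dotProduct_comm, dotProduct_mulVec z, ← mulVec_transpose, h]
  obtain ⟨C, hC⟩ : ∃ C : Fin (n+1) → Fin (n+2) → ℝ, C = fun i k => Q k i := ⟨_, rfl⟩
  have hcol : ∀ (i : Fin (n+1)) (z : Fin (n+2) → ℝ), C i ⬝ᵥ (M *ᵥ z) = ((Qᵀ * M) *ᵥ z) i := by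
    intro i z
    rw [← mulVec_mulVec, hC]; rfl
  have hcq : ∀ i : Fin (n+1), C i ⬝ᵥ (M *ᵥ q) = 0 := by
    intro i
    rw [hcol, hQMq]; rfl
  have horth : ∀ i j : Fin (n+2),
      (Fin.cons q C : Fin (n+2) → Fin (n+2) → ℝ) i ⬝ᵥ
        (M *ᵥ (Fin.cons q C : Fin (n+2) → Fin (n+2) → ℝ) j) = if i = j then (1:ℝ) else 0 := by
    intro i j
    refine Fin.cases ?_ (fun i => ?_) i <;> refine Fin.cases ?_ (fun j => ?_) j
    · simpa using hq1
    · have h := hcq j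
      rw [hsym] at h
      simp only [Fin.cons_zero, Fin.cons_succ, h]
      rw [if_neg (Fin.succ_ne_zero j).symm]
    · simp only [Fin.cons_zero, Fin.cons_succ, hcq i]
      rw [if_neg (Fin.succ_ne_zero i)]
    · simp only [Fin.cons_succ, Fin.succ_inj]
      rw [← Matrix.one_apply, ← hQMQ, hcol, hC]
      rfl
  have h := aux_expand M _ horth x
  rw [Fin.sum_univ_succ] at h
  simp only [Fin.cons_zero, Fin.cons_succ] at h
  conv_lhs => rw [h]
  congr 1
  ext k
  simp only [Finset.sum_apply, Pi.smul_apply, smul_eq_mul, hcol]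
  simp only [hC]
  rw [mulVec, dotProduct]
  exact Finset.sum_congr rfl fun i _ => mul_comm _ _

lemma aux_hess_quad {m : ℕ} (B : Matrix (Fin m) (Fin m) ℝ) (b : Fin m → ℝ) (ρ : ℝ)
    (y v : Fin m → ℝ) :
    v ⬝ᵥ (hessPhi B b ρ y *ᵥ v) = 2 / (y ⬝ᵥ y + 1) * (v ⬝ᵥ (B *ᵥ v) - phiAux B b ρ y * (v ⬝ᵥ v) -
      2 * (v ⬝ᵥ y) * (2 / (y ⬝ᵥ y + 1) * (v ⬝ᵥ (B *ᵥ y - phiAux B b ρ y • y + b)))) := by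
  have hg : v ⬝ᵥ gradPhi B b ρ y =
      2 / (y ⬝ᵥ y + 1) * (v ⬝ᵥ (B *ᵥ y - phiAux B b ρ y • y + b)) := by
    rw [gradPhi, dotProduct_smul, smul_eq_mul]
  rw [← hg]
  have hv : ∀ w z : Fin m → ℝ, v ⬝ᵥ (vecMulVec w z *ᵥ v) = (v ⬝ᵥ w) * (v ⬝ᵥ z) := by
    intro w z
    rw [vecMulVec_mulVec, dotProduct_comm z v]
    simp [dotProduct_smul, mul_comm]
  rw [hessPhi]
  simp only [smul_mulVec, sub_mulVec, dotProduct_smul, dotProduct_sub, smul_eq_mul, hv, one_mulVec]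
  ring

lemma aux_hess_herm {m : ℕ} (B : Matrix (Fin m) (Fin m) ℝ) (hB : B.IsHermitian)
    (b : Fin m → ℝ) (ρ : ℝ) (y : Fin m → ℝ) : (hessPhi B b ρ y).IsHermitian := by
  apply IsHermitian.ext
  intro i j
  have h := hB.apply i j
  simp only [star_trivial] at h
  simp only [hessPhi, star_trivial, Matrix.smul_apply, Matrix.sub_apply, vecMulVec_apply, h,
    Matrix.one_apply, eq_comm (a := j) (b := i), smul_eq_mul]
  ring

/-- Under λ₁ ≤ ρ_q < λ₁ + (λ₂−λ₁)/(2+χ_P), we have μ_P > 0 and for all y ∈ Y,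
μ_P P ⪯ ∇²φ(y) ⪯ L_P P. -/
theorem stmt_4 (n : ℕ)
    (A M : Matrix (Fin (n+2)) (Fin (n+2)) ℝ)
    (hA : A.PosDef) (hM : M.PosDef)
    (q : Fin (n+2) → ℝ) (Q : Matrix (Fin (n+2)) (Fin (n+1)) ℝ)
    (hq1 : q ⬝ᵥ (M *ᵥ q) = 1)
    (hQMQ : Qᵀ * M * Q = 1)
    (hQMq : (Qᵀ * M) *ᵥ q = 0)
    (lam : Fin (n+2) → ℝ) (u : Fin (n+2) → Fin (n+2) → ℝ)
    (hlam0 : 0 < lam 0) (hlam01 : lam 0 < lam 1) (hmono : Monotone lam)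
    (heig : ∀ i, A *ᵥ u i = lam i • (M *ᵥ u i))
    (horth : ∀ i j, u i ⬝ᵥ (M *ᵥ u j) = if i = j then (1:ℝ) else 0)
    (hqu1 : 0 < q ⬝ᵥ (M *ᵥ u 0))
    (B : Matrix (Fin (n+1)) (Fin (n+1)) ℝ) (hB : B = Qᵀ * A * Q)
    (b : Fin (n+1) → ℝ) (hb : b = (Qᵀ * A) *ᵥ q)
    (ρq : ℝ) (hρq : ρq = Rq A M q)
    (P : Matrix (Fin (n+1)) (Fin (n+1)) ℝ) (hP : P.PosDef)
    (ximin ximax : ℝ)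
    (hximin : IsLeast {ξ : ℝ | ∃ v : Fin (n+1) → ℝ, v ≠ 0 ∧ B *ᵥ v = ξ • (P *ᵥ v)} ximin)
    (hximax : IsGreatest {ξ : ℝ | ∃ v : Fin (n+1) → ℝ, v ≠ 0 ∧ B *ᵥ v = ξ • (P *ᵥ v)} ximax)
    (χP : ℝ)
    (hχP : χP = (8 * lam 1 / lam 0) * (ximax / ximin) *
      Real.sqrt ((lam 1 + lam 0) / (2 * (lam 1 - lam 0))))
    (μP LP : ℝ)
    (hμP : μP = 2 * ximin * (1 - 4 * (ρq - lam 0) / (lam 1 - lam 0)) *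
      (1 - lam 0 / lam 1 - (2 + χP) * (ρq - lam 0) / lam 1))
    (hLP : LP = 2 * ximax * (1 - lam 0 / lam (Fin.last (n+1)) +
      (χP / lam 1) * (ximin / ximax) * (ρq - lam 0)))
    (hρ1 : lam 0 ≤ ρq) (hρ2 : ρq < lam 0 + (lam 1 - lam 0) / (2 + χP)) :
    0 < μP ∧
    ∀ y ∈ psiMap M q Q '' (Xset A M q),
      (hessPhi B b ρq y - μP • P).PosSemidef ∧
      (LP • P - hessPhi B b ρq y).PosSemidef := by
  have hl : ∀ i, 0 < lam i := fun i => hlam0.trans_le (hmono (Fin.zero_le i))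
  have hd : 0 < lam 1 - lam 0 := by linarith
  have hBA : ∀ v w : Fin (n+1) → ℝ, (Q *ᵥ v) ⬝ᵥ (A *ᵥ (Q *ᵥ w)) = v ⬝ᵥ (B *ᵥ w) := by
    intro v w
    rw [aux_adj, hB, ← mulVec_mulVec, ← mulVec_mulVec]
  have hbA : ∀ v : Fin (n+1) → ℝ, (Q *ᵥ v) ⬝ᵥ (A *ᵥ q) = v ⬝ᵥ b := by
    intro v
    rw [aux_adj, hb, ← mulVec_mulVec]
  have hQQ : ∀ v w : Fin (n+1) → ℝ, (Q *ᵥ v) ⬝ᵥ (M *ᵥ (Q *ᵥ w)) = v ⬝ᵥ w := by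
    intro v w
    rw [aux_adj, mulVec_mulVec, mulVec_mulVec, hQMQ, one_mulVec]
  have hQq : ∀ v : Fin (n+1) → ℝ, (Q *ᵥ v) ⬝ᵥ (M *ᵥ q) = 0 := by
    intro v
    rw [aux_adj, mulVec_mulVec, hQMq, dotProduct_zero]
  have hBherm : B.IsHermitian := by
    have := hA.isHermitian
    rw [hB]
    simpa using isHermitian_conjTranspose_mul_mul Q this
  have hPpos : ∀ w : Fin (n+1) → ℝ, w ≠ 0 → 0 < w ⬝ᵥ (P *ᵥ w) := by
    intro w hw
    simpa using hP.dotProduct_mulVec_pos hw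
  obtain ⟨α, hαM, hαA⟩ := aux_coord A M lam u hM heig horth
  have hρA : q ⬝ᵥ (A *ᵥ q) = ρq := by rw [hρq, Rq, hq1, div_one]
  have hc : ∑ i, α q i ^ 2 = 1 := by
    rw [← hq1, hαM]; exact Finset.sum_congr rfl fun i _ => by ring
  have hcρ : ∑ i, lam i * α q i ^ 2 = ρq := by
    rw [← hρA, hαA]; exact Finset.sum_congr rfl fun i _ => by ring
  have haM : ∀ v, ∑ i, α (Q *ᵥ v) i ^ 2 = v ⬝ᵥ v := by
    intro v
    rw [← hQQ, hαM]; exact Finset.sum_congr rfl fun i _ => by ring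
  have haA : ∀ v, ∑ i, lam i * α (Q *ᵥ v) i ^ 2 = v ⬝ᵥ (B *ᵥ v) := by
    intro v
    rw [← hBA, hαA]; exact Finset.sum_congr rfl fun i _ => by ring
  have hvv : ∀ v : Fin (n+1) → ℝ, 0 ≤ v ⬝ᵥ v := fun v => by
    rw [← haM]; exact Finset.sum_nonneg fun i _ => sq_nonneg _
  have hvB : ∀ v : Fin (n+1) → ℝ, 0 ≤ v ⬝ᵥ (B *ᵥ v) := fun v => by
    rw [← haA]; exact Finset.sum_nonneg fun i _ => mul_nonneg (hl i).le (sq_nonneg _)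
  have hvBpos : ∀ v : Fin (n+1) → ℝ, v ≠ 0 → 0 < v ⬝ᵥ (B *ᵥ v) := by
    intro v hv
    have h1 := aux_lo0 lam (α (Q *ᵥ v)) hmono
    rw [haM, haA] at h1
    have h2 : 0 < v ⬝ᵥ v := lt_of_le_of_ne (hvv v) (fun h => hv (dotProduct_self_eq_zero.mp h.symm))
    exact (mul_pos hlam0 h2).trans_le h1
  have hxipos : ∀ ξ : ℝ, (∃ v : Fin (n+1) → ℝ, v ≠ 0 ∧ B *ᵥ v = ξ • (P *ᵥ v)) → 0 < ξ := by
    rintro ξ ⟨v, hv, h⟩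
    have h1 := hvBpos v hv
    rw [h, dotProduct_smul, smul_eq_mul] at h1
    exact pos_of_mul_pos_left h1 (hPpos v hv).le
  have hξ0 : 0 < ximin := hxipos _ hximin.1
  have hξ1 : 0 < ximax := hxipos _ hximax.1
  have hξle : ximin ≤ ximax := hximin.2 hximax.1
  have hPnn : ∀ w : Fin (n+1) → ℝ, 0 ≤ w ⬝ᵥ (P *ᵥ w) := by
    intro w
    simpa using hP.posSemidef.dotProduct_mulVec_nonneg w
  have G0 : ∀ w, ximin * (w ⬝ᵥ (P *ᵥ w)) ≤ w ⬝ᵥ (B *ᵥ w) := by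
    obtain ⟨t, v, hv, hvt, ht⟩ := aux_pencil B P hBherm hP
    intro w
    exact (mul_le_mul_of_nonneg_right (hximin.2 ⟨v, hv, hvt⟩) (hPnn w)).trans (ht w)
  have G1 : ∀ w, w ⬝ᵥ (B *ᵥ w) ≤ ximax * (w ⬝ᵥ (P *ᵥ w)) := by
    obtain ⟨t, v, hv, hvt, ht⟩ := aux_pencil (-B) P hBherm.neg hP
    intro w
    have h1 : -t ≤ ximax := hximax.2 ⟨v, hv, by
      rw [neg_mulVec] at hvt
      rw [neg_smul, ← hvt, neg_neg]⟩
    have h2 := ht w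
    rw [neg_mulVec, dotProduct_neg] at h2
    have h3 := mul_le_mul_of_nonneg_right h1 (hPnn w)
    linarith
  set κ := Real.sqrt ((lam 1 + lam 0) / (2 * (lam 1 - lam 0))) with hκdef
  have hκ : 1 / 2 ≤ κ := by
    apply Real.le_sqrt_of_sq_le
    rw [le_div_iff₀ (by linarith)]
    linarith
  have hχ4 : 4 ≤ χP := by
    have e1 : 8 ≤ 8 * lam 1 / lam 0 := by rw [le_div_iff₀ hlam0]; linarith
    have e2 : 1 ≤ ximax / ximin := by rw [le_div_iff₀ hξ0]; linarith
    have e3 : 8 * 1 ≤ (8 * lam 1 / lam 0) * (ximax / ximin) :=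
      mul_le_mul e1 e2 (by norm_num) (by linarith)
    have e4 := mul_le_mul e3 hκ (by norm_num) (by linarith)
    rw [hχP]
    linarith
  have hd2 : (2 + χP) * (ρq - lam 0) < lam 1 - lam 0 := by
    have : ρq - lam 0 < (lam 1 - lam 0) / (2 + χP) := by linarith
    rw [lt_div_iff₀ (by linarith)] at this
    linarith
  have hdd : 6 * (ρq - lam 0) < lam 1 - lam 0 := by
    have := mul_le_mul_of_nonneg_right (show 6 ≤ 2 + χP by linarith) (sub_nonneg.mpr hρ1)
    linarith
  constructor
  · rw [hμP]
    have e1 : 1 - 4 * (ρq - lam 0) / (lam 1 - lam 0) =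
        (lam 1 - lam 0 - 4 * (ρq - lam 0)) / (lam 1 - lam 0) := by field_simp
    have e2 : 1 - lam 0 / lam 1 - (2 + χP) * (ρq - lam 0) / lam 1 =
        (lam 1 - lam 0 - (2 + χP) * (ρq - lam 0)) / lam 1 := by
      have := (hl 1).ne'
      field_simp
    rw [e1, e2]
    exact mul_pos (mul_pos (by linarith) (div_pos (by linarith) hd)) (div_pos (by linarith) (hl 1))
  rintro y ⟨x, ⟨⟨hx1, hx2⟩, hx3⟩, rfl⟩
  set y := psiMap M q Q x with hy
  have hxM : x ⬝ᵥ (M *ᵥ x) = 1 := by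
    rw [Mnorm] at hx1
    exact Real.sqrt_eq_one.mp hx1
  have hz : Q *ᵥ y + q = (q ⬝ᵥ (M *ᵥ x))⁻¹ • x := by
    have hcx := aux_complete M hM q Q hq1 hQMQ hQMq x
    have h2 := congrArg (fun w => (q ⬝ᵥ (M *ᵥ x))⁻¹ • w) hcx
    rw [h2, smul_add, smul_smul, inv_mul_cancel₀ hx2.ne', one_smul, hy, psiMap, mulVec_smul]
    exact add_comm _ _
  set t := q ⬝ᵥ (M *ᵥ x) with ht
  set z := Q *ᵥ y + q with hzdef
  have hMs : ∀ x z, x ⬝ᵥ (M *ᵥ z) = z ⬝ᵥ (M *ᵥ x) := by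
    intro x z
    rw [hαM, hαM]; exact Finset.sum_congr rfl fun i _ => by ring
  have hAs : ∀ x z, x ⬝ᵥ (A *ᵥ z) = z ⬝ᵥ (A *ᵥ x) := by
    intro x z
    rw [hαA, hαA]; exact Finset.sum_congr rfl fun i _ => by ring
  have hzM : z ⬝ᵥ (M *ᵥ z) = y ⬝ᵥ y + 1 := by
    rw [hzdef, mulVec_add, dotProduct_add, add_dotProduct, add_dotProduct, hQQ, hQq,
      hMs q (Q *ᵥ y), hQq, hq1]
    ring
  have hzA : z ⬝ᵥ (A *ᵥ z) = y ⬝ᵥ (B *ᵥ y) + 2 * (y ⬝ᵥ b) + ρq := by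
    rw [hzdef, mulVec_add, dotProduct_add, add_dotProduct, add_dotProduct, hBA, hbA,
      hAs q (Q *ᵥ y), hbA, hρA]
    ring
  have hN : 0 < y ⬝ᵥ y + 1 := by linarith [hvv y]
  set φ := phiAux B b ρq y with hφdef
  have hzφ : z ⬝ᵥ (A *ᵥ z) = φ * (y ⬝ᵥ y + 1) := by
    rw [hzA, hφdef, phiAux, div_mul_cancel₀ _ hN.ne']
  have hφ2 : φ ≤ ρq := by
    have h1 : z ⬝ᵥ (A *ᵥ z) ≤ ρq * (z ⬝ᵥ (M *ᵥ z)) := by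
      rw [Rq, hxM, div_one, ← hρq] at hx3
      rw [hz, mulVec_smul, mulVec_smul, dotProduct_smul, dotProduct_smul, smul_dotProduct,
        smul_dotProduct, hxM]
      simp only [smul_eq_mul]
      have := mul_le_mul_of_nonneg_left hx3 (mul_self_nonneg t⁻¹)
      linarith
    rw [hzφ, hzM] at h1
    exact le_of_mul_le_mul_right h1 hN
  have hξM : ∑ i, α z i ^ 2 = y ⬝ᵥ y + 1 := by
    rw [← hzM, hαM]; exact Finset.sum_congr rfl fun i _ => by ring
  have hξA : ∑ i, lam i * α z i ^ 2 = φ * (y ⬝ᵥ y + 1) := by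
    rw [← hzφ, hαA]; exact Finset.sum_congr rfl fun i _ => by ring
  have hφ1 : lam 0 ≤ φ := by
    have h1 := aux_lo0 lam (α z) hmono
    rw [hξM, hξA] at h1
    exact le_of_mul_le_mul_right h1 hN
  have hzq : ∑ i, α z i * α q i = 1 := by
    rw [← hαM, hzdef, add_dotProduct, hQq, hq1, zero_add]
  have F5 : (y ⬝ᵥ y + 1) * (1 - 2 * ((ρq - lam 0) / (lam 1 - lam 0))) ^ 2 ≤ 1 := by
    apply aux_angle lam (α q) (α z) hmono hlam01 ρq _ _ hc hξM hzq hcρ.le _ rfl _ hN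
    · exact div_nonneg (by linarith) hd.le
    · rw [hξA]
      exact mul_le_mul_of_nonneg_right hφ2 hN.le
    · rw [div_lt_iff₀ hd]
      linarith
  have key : ∀ v : Fin (n+1) → ℝ,
      μP * (v ⬝ᵥ (P *ᵥ v)) ≤ v ⬝ᵥ (hessPhi B b ρq y *ᵥ v) ∧
      v ⬝ᵥ (hessPhi B b ρq y *ᵥ v) ≤ LP * (v ⬝ᵥ (P *ᵥ v)) := by
    intro v
    have F1 : (lam 0 + lam 1 - ρq) * (v ⬝ᵥ v) ≤ v ⬝ᵥ (B *ᵥ v) := by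
      have h1 := aux_low lam (α (Q *ᵥ v)) (α q) hmono (by rw [← hαM, hQq]) hc ρq hcρ
      rwa [haM, haA] at h1
    have F2 : v ⬝ᵥ (B *ᵥ v) ≤ lam (Fin.last (n+1)) * (v ⬝ᵥ v) := by
      have h1 := aux_up lam (α (Q *ᵥ v)) hmono
      rwa [haM, haA] at h1
    have F3 : (v ⬝ᵥ y) ^ 2 ≤ (y ⬝ᵥ y) * (v ⬝ᵥ v) := by
      have h1 := Finset.sum_mul_sq_le_sq_mul_sq Finset.univ v y
      simp only [dotProduct]
      simp only [← sq]
      linarith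
    have hvr : v ⬝ᵥ (B *ᵥ y - φ • y + b) = ∑ i, (lam i - φ) * α (Q *ᵥ v) i * α z i := by
      have h1 : (Q *ᵥ v) ⬝ᵥ (A *ᵥ z) = v ⬝ᵥ (B *ᵥ y) + v ⬝ᵥ b := by
        rw [hzdef, mulVec_add, dotProduct_add, hBA, hbA]
      have h2 : (Q *ᵥ v) ⬝ᵥ (M *ᵥ z) = v ⬝ᵥ y := by
        rw [hzdef, mulVec_add, dotProduct_add, hQQ, hQq, add_zero]
      rw [dotProduct_add, dotProduct_sub, dotProduct_smul, smul_eq_mul, ← h2, hαM]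
      rw [hαA] at h1
      have h3 : ∑ i, (lam i - φ) * α (Q *ᵥ v) i * α z i =
          ∑ i, lam i * α (Q *ᵥ v) i * α z i - φ * ∑ i, α (Q *ᵥ v) i * α z i := by
        rw [Finset.mul_sum, ← Finset.sum_sub_distrib]
        exact Finset.sum_congr rfl fun i _ => by ring
      rw [h3, h1]
      ring
    have F4 : (v ⬝ᵥ (B *ᵥ y - φ • y + b)) ^ 2 ≤
        (v ⬝ᵥ (B *ᵥ v)) * ((y ⬝ᵥ y + 1) * φ * (φ - lam 0) / lam 0) := by
      have h1 := aux_res lam (α (Q *ᵥ v)) (α z) hmono hlam0 φ _ hξM hξA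
      rwa [haA, ← hvr] at h1
    have hT := aux_T (lam 0) (lam 1) ρq φ (v ⬝ᵥ v) (v ⬝ᵥ (B *ᵥ v)) (y ⬝ᵥ y) (v ⬝ᵥ y)
      (v ⬝ᵥ (B *ᵥ y - φ • y + b)) hlam0 hlam01 hρ1 (by linarith) hφ1 hφ2 (hvv v) (hvB v) (hvv y)
      F1 F3 F4 F5
    have hF := aux_final (lam 0) (lam 1) (lam (Fin.last (n+1))) ρq φ (v ⬝ᵥ v) (v ⬝ᵥ (B *ᵥ v))
      (y ⬝ᵥ y) _ (v ⬝ᵥ (P *ᵥ v)) ximin ximax χP κ hlam0 hlam01 (hmono (Fin.le_last 1)) hρ1 hφ1 hφ2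
      (hvv v) (hvB v) (hvv y) (hPnn v) hξ0 hξ1 F1 F2 (G0 v) (G1 v) F5 (by linarith) hχP hχ4 hT hρ2
    rw [aux_hess_quad, hμP, hLP]
    exact hF
  have hPh : ∀ c : ℝ, (c • P).IsHermitian := by
    intro c
    have h2 := hP.isHermitian
    unfold IsHermitian at *
    rw [conjTranspose_smul, h2]; simp
  constructor
  · apply PosSemidef.of_dotProduct_mulVec_nonneg
    · exact (aux_hess_herm B hBherm b ρq y).sub (hPh _)
    · intro v
      simp only [star_trivial, sub_mulVec, smul_mulVec, dotProduct_sub, dotProduct_smul, smul_eq_mul]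
      linarith [(key v).1]
  · apply PosSemidef.of_dotProduct_mulVec_nonneg
    · exact (hPh _).sub (aux_hess_herm B hBherm b ρq y)
    · intro v
      simp only [star_trivial, sub_mulVec, smul_mulVec, dotProduct_sub, dotProduct_smul, smul_eq_mul]
      linarith [(key v).2]
end

section
/- Suppose λ₁ ≤ ρ_q < λ₁ + (λ₂−λ₁)/(2+χ_P). Let y* = ψ(u₁), so φ(y*) = λ₁. Then: (i) for any y ∈ Y, φ(y) − λ₁ ≤ (L_P/2)‖y − y*‖²_P; and conversely (ii) for any y ∈ ℝ^{n−1}, if ‖y − y*‖²_P ≤ 2(ρ_q − λ₁)/L_P then y ∈ Y. Here ‖v‖²_P = vᵀPv. -/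
open Matrix

lemma aux_symm {k : ℕ} {A : Matrix (Fin k) (Fin k) ℝ} (hA : A.PosDef) (x y : Fin k → ℝ) :
    x ⬝ᵥ (A *ᵥ y) = y ⬝ᵥ (A *ᵥ x) := by
  have h : Aᵀ = A := by
    have := hA.isHermitian
    simpa [Matrix.IsHermitian, Matrix.conjTranspose_eq_transpose_of_trivial] using this
  rw [dotProduct_mulVec, ← mulVec_transpose, h, dotProduct_comm]

lemma aux_pos {k : ℕ} {A : Matrix (Fin k) (Fin k) ℝ} (hA : A.PosDef) {x : Fin k → ℝ} (hx : x ≠ 0) :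
    0 < x ⬝ᵥ (A *ᵥ x) := by
  simpa using hA.dotProduct_mulVec_pos hx

lemma aux_nonneg {k : ℕ} {A : Matrix (Fin k) (Fin k) ℝ} (hA : A.PosDef) (x : Fin k → ℝ) :
    0 ≤ x ⬝ᵥ (A *ᵥ x) := by
  simpa using hA.posSemidef.dotProduct_mulVec_nonneg x

lemma aux_max {k : ℕ} {A M : Matrix (Fin (k+1)) (Fin (k+1)) ℝ} (hA : A.IsHermitian)
    (hM : M.PosDef) : ∃ (t : ℝ) (v : Fin (k+1) → ℝ), v ≠ 0 ∧ A *ᵥ v = t • (M *ᵥ v) ∧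
      ∀ x, x ⬝ᵥ (A *ᵥ x) ≤ t * (x ⬝ᵥ (M *ᵥ x)) := by
  have hne0 : ∀ x ∈ Metric.sphere (0 : Fin (k+1) → ℝ) 1, x ≠ 0 := by
    intro x hx h0
    subst h0
    simp at hx
  have hcont : ContinuousOn (fun x : Fin (k+1) → ℝ => (x ⬝ᵥ (A *ᵥ x)) / (x ⬝ᵥ (M *ᵥ x)))
      (Metric.sphere (0 : Fin (k+1) → ℝ) 1) := by
    apply ContinuousOn.div
    · fun_prop
    · fun_prop
    · intro x hx
      exact (aux_pos hM (hne0 x hx)).ne'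
  obtain ⟨v, hv, hmax⟩ := (isCompact_sphere (0 : Fin (k+1) → ℝ) 1).exists_isMaxOn
    (NormedSpace.sphere_nonempty.mpr zero_le_one) hcont
  set t := (v ⬝ᵥ (A *ᵥ v)) / (v ⬝ᵥ (M *ᵥ v)) with ht
  have hv0 := hne0 v hv
  have hle : ∀ x, x ⬝ᵥ (A *ᵥ x) ≤ t * (x ⬝ᵥ (M *ᵥ x)) := by
    intro x
    by_cases hx : x = 0
    · simp [hx]
    have hn : 0 < ‖x‖ := norm_pos_iff.mpr hx
    have hmem : ‖x‖⁻¹ • x ∈ Metric.sphere (0 : Fin (k+1) → ℝ) 1 := by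
      simp [norm_smul, hn.ne']
    have h1 := hmax hmem
    simp only [Set.mem_ofPred_eq, mulVec_smul, smul_dotProduct, dotProduct_smul, smul_eq_mul] at h1
    rw [mul_div_mul_left _ _ (by positivity), mul_div_mul_left _ _ (by positivity)] at h1
    exact (div_le_iff₀ (aux_pos hM hx)).mp h1
  have hpsd : (t • M - A).PosSemidef := by
    apply Matrix.PosSemidef.of_dotProduct_mulVec_nonneg
    · apply Matrix.IsHermitian.sub _ hA
      have := hM.isHermitian
      rw [Matrix.IsHermitian] at this ⊢
      rw [Matrix.conjTranspose_smul, this, star_trivial]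
    · intro x
      have := hle x
      simp only [star_trivial, sub_mulVec, smul_mulVec, dotProduct_sub, dotProduct_smul, smul_eq_mul]
      linarith
  refine ⟨t, v, hv0, ?_, hle⟩
  have hz : (t • M - A) *ᵥ v = 0 := by
    rw [← hpsd.dotProduct_mulVec_zero_iff]
    simp only [star_trivial, sub_mulVec, smul_mulVec, dotProduct_sub, dotProduct_smul, smul_eq_mul]
    rw [ht, div_mul_cancel₀ _ (aux_pos hM hv0).ne', sub_self]
  rw [sub_mulVec, smul_mulVec, sub_eq_zero] at hz
  exact hz.symm

lemma aux_orth {k : ℕ} {M : Matrix (Fin k) (Fin k) ℝ} (w : Fin k → Fin k → ℝ)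
    (h : ∀ i j, w i ⬝ᵥ (M *ᵥ w j) = if i = j then (1:ℝ) else 0) (x : Fin k → ℝ)
    (hx : ∀ i, w i ⬝ᵥ (M *ᵥ x) = 0) : x = 0 := by
  have h1 : Matrix.of w * (M * (Matrix.of w)ᵀ) = 1 := by
    ext i j
    rw [Matrix.one_apply, ← h i j]
    rfl
  rw [← Matrix.mul_assoc] at h1
  have h2 := mul_eq_one_comm.mp h1
  have h3 : (Matrix.of w * M) *ᵥ x = 0 := by
    rw [← mulVec_mulVec]
    ext i
    exact hx i
  rw [← one_mulVec x, ← h2, ← mulVec_mulVec, h3, mulVec_zero]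

lemma aux_Q {k l : ℕ} (Q : Matrix (Fin k) (Fin l) ℝ) (A : Matrix (Fin k) (Fin k) ℝ)
    (y : Fin l → ℝ) (z : Fin k → ℝ) :
    (Q *ᵥ y) ⬝ᵥ (A *ᵥ z) = y ⬝ᵥ ((Qᵀ * A) *ᵥ z) := by
  rw [← mulVec_mulVec, dotProduct_mulVec y, vecMul_transpose]

/-- Under λ₁ ≤ ρ_q < λ₁ + (λ₂−λ₁)/(2+χ_P), with y* = ψ(u₁) (so φ(y*) = λ₁):
(i) for any y ∈ Y, φ(y) − λ₁ ≤ (L_P/2)‖y − y*‖²_P;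
(ii) conversely, if ‖y − y*‖²_P ≤ 2(ρ_q − λ₁)/L_P then y ∈ Y. -/
theorem stmt_10 (n : ℕ)
    (A M : Matrix (Fin (n+2)) (Fin (n+2)) ℝ)
    (hA : A.PosDef) (hM : M.PosDef)
    (q : Fin (n+2) → ℝ) (Q : Matrix (Fin (n+2)) (Fin (n+1)) ℝ)
    (hq1 : q ⬝ᵥ (M *ᵥ q) = 1)
    (hQMQ : Qᵀ * M * Q = 1)
    (hQMq : (Qᵀ * M) *ᵥ q = 0)
    (lam : Fin (n+2) → ℝ) (u : Fin (n+2) → Fin (n+2) → ℝ)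
    (hlam0 : 0 < lam 0) (hlam01 : lam 0 < lam 1) (hmono : Monotone lam)
    (heig : ∀ i, A *ᵥ u i = lam i • (M *ᵥ u i))
    (horth : ∀ i j, u i ⬝ᵥ (M *ᵥ u j) = if i = j then (1:ℝ) else 0)
    (hqu1 : 0 < q ⬝ᵥ (M *ᵥ u 0))
    (B : Matrix (Fin (n+1)) (Fin (n+1)) ℝ) (hB : B = Qᵀ * A * Q)
    (b : Fin (n+1) → ℝ) (hb : b = (Qᵀ * A) *ᵥ q)
    (ρq : ℝ) (hρq : ρq = Rq A M q)
    (P : Matrix (Fin (n+1)) (Fin (n+1)) ℝ) (hP : P.PosDef)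
    (ximin ximax : ℝ)
    (hximin : IsLeast {ξ : ℝ | ∃ v : Fin (n+1) → ℝ, v ≠ 0 ∧ B *ᵥ v = ξ • (P *ᵥ v)} ximin)
    (hximax : IsGreatest {ξ : ℝ | ∃ v : Fin (n+1) → ℝ, v ≠ 0 ∧ B *ᵥ v = ξ • (P *ᵥ v)} ximax)
    (χP : ℝ)
    (hχP : χP = (8 * lam 1 / lam 0) * (ximax / ximin) *
      Real.sqrt ((lam 1 + lam 0) / (2 * (lam 1 - lam 0))))
    (LP : ℝ)
    (hLP : LP = 2 * ximax * (1 - lam 0 / lam (Fin.last (n+1)) +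
      (χP / lam 1) * (ximin / ximax) * (ρq - lam 0)))
    (hρ1 : lam 0 ≤ ρq) (hρ2 : ρq < lam 0 + (lam 1 - lam 0) / (2 + χP))
    (ystar : Fin (n+1) → ℝ) (hystar : ystar = psiMap M q Q (u 0)) :
    phiAux B b ρq ystar = lam 0 ∧
    (∀ y ∈ psiMap M q Q '' (Xset A M q),
      phiAux B b ρq y - lam 0 ≤ LP / 2 * ((y - ystar) ⬝ᵥ (P *ᵥ (y - ystar)))) ∧
    (∀ y : Fin (n+1) → ℝ,
      (y - ystar) ⬝ᵥ (P *ᵥ (y - ystar)) ≤ 2 * (ρq - lam 0) / LP →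
        y ∈ psiMap M q Q '' (Xset A M q)) := by
  have hc := hqu1
  set c := q ⬝ᵥ (M *ᵥ u 0) with hcdef
  have hρA : ρq = q ⬝ᵥ (A *ᵥ q) := by rw [hρq, Rq, hq1, div_one]
  -- quadratic forms in z
  have hzA : ∀ y, (Q *ᵥ y + q) ⬝ᵥ (A *ᵥ (Q *ᵥ y + q)) = y ⬝ᵥ (B *ᵥ y) + 2 * (y ⬝ᵥ b) + ρq := by
    intro y
    rw [mulVec_add, add_dotProduct, dotProduct_add, dotProduct_add, aux_symm hA q (Q *ᵥ y),
      aux_Q, aux_Q, mulVec_mulVec, ← hB, ← hb, ← hρA]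
    ring
  have hQM : ∀ y z, (Q *ᵥ y) ⬝ᵥ (M *ᵥ (Q *ᵥ z)) = y ⬝ᵥ z := by
    intro y z
    rw [aux_Q, mulVec_mulVec, hQMQ, one_mulVec]
  have hQA : ∀ y z, (Q *ᵥ y) ⬝ᵥ (A *ᵥ (Q *ᵥ z)) = y ⬝ᵥ (B *ᵥ z) := by
    intro y z
    rw [aux_Q, mulVec_mulVec, ← hB]
  have hQq : ∀ y, (Q *ᵥ y) ⬝ᵥ (M *ᵥ q) = 0 := by
    intro y
    rw [aux_Q, hQMq, dotProduct_zero]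
  have hqQ : ∀ y, q ⬝ᵥ (M *ᵥ (Q *ᵥ y)) = 0 := by
    intro y
    rw [aux_symm hM, hQq]
  have hzM : ∀ y, (Q *ᵥ y + q) ⬝ᵥ (M *ᵥ (Q *ᵥ y + q)) = y ⬝ᵥ y + 1 := by
    intro y
    rw [mulVec_add, add_dotProduct, dotProduct_add, dotProduct_add, hQM, hQq, hqQ, hq1]
    ring
  have hyy : ∀ y : Fin (n+1) → ℝ, 0 ≤ y ⬝ᵥ y := fun y => by
    simpa using dotProduct_star_self_nonneg y
  -- zstar
  have hzs : Q *ᵥ ystar + q = c⁻¹ • u 0 := by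
    have key : u 0 - c • q - Q *ᵥ ((Qᵀ * M) *ᵥ u 0) = 0 := by
      obtain ⟨w, hw0, hws⟩ : ∃ w : Fin (n+2) → Fin (n+2) → ℝ, w 0 = q ∧
          ∀ i : Fin (n+1), w i.succ = Q *ᵥ (Pi.single i 1) :=
        ⟨Fin.cons (α := fun _ => Fin (n+2) → ℝ) q (fun i => Q *ᵥ (Pi.single i 1)), rfl, fun _ => rfl⟩
      apply aux_orth (M := M) w
      · intro i j
        refine Fin.cases ?_ (fun i => ?_) i <;> refine Fin.cases ?_ (fun j => ?_) j
        · rw [hw0, hq1, if_pos rfl]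
        · rw [hw0, hws, hqQ, if_neg (Fin.succ_ne_zero j).symm]
        · rw [hw0, hws, hQq, if_neg (Fin.succ_ne_zero i)]
        · rw [hws, hws, hQM]
          simp [Pi.single_apply, eq_comm]
      · intro i
        refine Fin.cases ?_ (fun i => ?_) i
        · rw [hw0, mulVec_sub, mulVec_sub, dotProduct_sub, dotProduct_sub, mulVec_smul,
            dotProduct_smul, hq1, hqQ]
          simp [hcdef]
        · rw [hws, mulVec_sub, mulVec_sub, dotProduct_sub, dotProduct_sub, mulVec_smul,
            dotProduct_smul, hQM, hQq, aux_Q]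
          simp
    have h2 : u 0 = c • q + Q *ᵥ ((Qᵀ * M) *ᵥ u 0) := by
      rw [sub_sub, sub_eq_zero] at key
      exact key
    rw [hystar, psiMap, mulVec_smul, ← hcdef]
    conv_rhs => rw [h2]
    rw [smul_add, smul_smul, inv_mul_cancel₀ hc.ne', one_smul]
    exact add_comm _ _
  have hAzs : A *ᵥ (Q *ᵥ ystar + q) = lam 0 • (M *ᵥ (Q *ᵥ ystar + q)) := by
    rw [hzs, mulVec_smul, heig 0, mulVec_smul, smul_comm]
  have hphi : ∀ y, phiAux B b ρq y - lam 0 =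
      ((y - ystar) ⬝ᵥ (B *ᵥ (y - ystar)) - lam 0 * ((y - ystar) ⬝ᵥ (y - ystar))) / (y ⬝ᵥ y + 1) := by
    intro y
    have hpos : 0 < y ⬝ᵥ y + 1 := by linarith [hyy y]
    have hz : Q *ᵥ y + q = Q *ᵥ (y - ystar) + (Q *ᵥ ystar + q) := by
      rw [mulVec_sub]; abel
    have e1 := hzA y
    have e2 := hzM y
    rw [hz, mulVec_add, add_dotProduct, dotProduct_add, dotProduct_add,
      aux_symm hA (Q *ᵥ ystar + q) (Q *ᵥ (y - ystar)), hAzs, hQA, dotProduct_smul, dotProduct_smul] at e1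
    rw [hz, mulVec_add, add_dotProduct, dotProduct_add, dotProduct_add,
      aux_symm hM (Q *ᵥ ystar + q) (Q *ᵥ (y - ystar)), hQM] at e2
    simp only [smul_eq_mul] at e1
    rw [phiAux, eq_div_iff hpos.ne', sub_mul, div_mul_cancel₀ _ hpos.ne']
    rw [← e1, ← e2]
    ring
  -- spectral bounds
  have hlast : lam 1 ≤ lam (Fin.last (n+1)) := hmono (Fin.le_last _)
  have hAM : ∀ x, x ⬝ᵥ (A *ᵥ x) ≤ lam (Fin.last (n+1)) * (x ⬝ᵥ (M *ᵥ x)) := by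
    obtain ⟨t, v, hv0, hv, hle⟩ := aux_max hA.isHermitian hM
    have ht : t ≤ lam (Fin.last (n+1)) := by
      by_contra! hlt
      apply hv0
      apply aux_orth u horth
      intro i
      have h1 : u i ⬝ᵥ (A *ᵥ v) = t * (u i ⬝ᵥ (M *ᵥ v)) := by
        rw [hv, dotProduct_smul, smul_eq_mul]
      have h2 : u i ⬝ᵥ (A *ᵥ v) = lam i * (u i ⬝ᵥ (M *ᵥ v)) := by
        rw [aux_symm hA, heig, dotProduct_smul, smul_eq_mul, aux_symm hM]
      have h3 : lam i ≤ lam (Fin.last (n+1)) := hmono (Fin.le_last _)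
      have h4 : (t - lam i) * (u i ⬝ᵥ (M *ᵥ v)) = 0 := by linarith
      rcases mul_eq_zero.mp h4 with h | h
      · linarith
      · exact h
    intro x
    exact (hle x).trans (mul_le_mul_of_nonneg_right ht (aux_nonneg hM x))
  have hBpos : ∀ y, y ≠ 0 → 0 < y ⬝ᵥ (B *ᵥ y) := by
    intro y hy
    rw [← hQA]
    apply aux_pos hA
    intro h
    have := hQM y y
    rw [h] at this
    simp only [zero_dotProduct] at this
    exact hy (dotProduct_self_eq_zero.mp this.symm)
  have hBh : B.IsHermitian := by
    rw [hB]
    have := Matrix.isHermitian_conjTranspose_mul_mul Q hA.isHermitian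
    simpa [Matrix.conjTranspose_eq_transpose_of_trivial] using this
  have hBP : ∀ y, y ⬝ᵥ (B *ᵥ y) ≤ ximax * (y ⬝ᵥ (P *ᵥ y)) := by
    obtain ⟨t, v, hv0, hv, hle⟩ := aux_max hBh hP
    have ht : t ≤ ximax := hximax.2 ⟨v, hv0, hv⟩
    intro x
    exact (hle x).trans (mul_le_mul_of_nonneg_right ht (aux_nonneg hP x))
  have hxipos : ∀ ξ ∈ {ξ : ℝ | ∃ v : Fin (n+1) → ℝ, v ≠ 0 ∧ B *ᵥ v = ξ • (P *ᵥ v)}, 0 < ξ := by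
    rintro ξ ⟨v, hv0, hv⟩
    have h1 := hBpos v hv0
    rw [hv, dotProduct_smul, smul_eq_mul] at h1
    exact pos_of_mul_pos_left h1 (aux_nonneg hP v)
  have hmin0 := hxipos _ hximin.1
  have hmax0 := hxipos _ hximax.1
  have hlam1 : 0 < lam 1 := hlam0.trans hlam01
  have hlamL : 0 < lam (Fin.last (n+1)) := hlam1.trans_le hlast
  have hχ0 : 0 ≤ χP := by rw [hχP]; positivity
  have hκ : 0 < 1 - lam 0 / lam (Fin.last (n+1)) := by
    rw [sub_pos, div_lt_one hlamL]; linarith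
  have hextra : 0 ≤ (χP / lam 1) * (ximin / ximax) * (ρq - lam 0) :=
    mul_nonneg (by positivity) (by linarith)
  have hLP0 : 0 < LP := by rw [hLP]; positivity
  have hmain : ∀ y, phiAux B b ρq y - lam 0 ≤ LP / 2 * ((y - ystar) ⬝ᵥ (P *ᵥ (y - ystar))) := by
    intro y
    rw [hphi]
    set d := y - ystar
    have h1 := hAM (Q *ᵥ d)
    rw [hQA, hQM] at h1
    have h2 : lam 0 / lam (Fin.last (n+1)) * (d ⬝ᵥ (B *ᵥ d)) ≤ lam 0 * (d ⬝ᵥ d) := by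
      rw [div_mul_eq_mul_div, div_le_iff₀ hlamL]
      nlinarith
    have hPd := aux_nonneg hP d
    have hB0 : 0 ≤ d ⬝ᵥ (B *ᵥ d) := by rw [← hQA]; exact aux_nonneg hA _
    have h3 : d ⬝ᵥ (B *ᵥ d) - lam 0 * (d ⬝ᵥ d) ≤ LP / 2 * (d ⬝ᵥ (P *ᵥ d)) := by
      calc d ⬝ᵥ (B *ᵥ d) - lam 0 * (d ⬝ᵥ d)
          ≤ (1 - lam 0 / lam (Fin.last (n+1))) * (d ⬝ᵥ (B *ᵥ d)) := by linarith
        _ ≤ (1 - lam 0 / lam (Fin.last (n+1))) * (ximax * (d ⬝ᵥ (P *ᵥ d))) :=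
            mul_le_mul_of_nonneg_left (hBP d) hκ.le
        _ ≤ LP / 2 * (d ⬝ᵥ (P *ᵥ d)) := by
            rw [hLP]
            have := mul_nonneg hextra (mul_nonneg hmax0.le hPd)
            nlinarith
    have hy := hyy y
    rw [div_le_iff₀ (by linarith)]
    have : 0 ≤ LP / 2 * (d ⬝ᵥ (P *ᵥ d)) := by positivity
    nlinarith
  refine ⟨?_, fun y _ => hmain y, ?_⟩
  · have := hphi ystar
    simp at this
    linarith
  · intro y hy
    have hle : phiAux B b ρq y ≤ ρq := by
      have h1 := hmain y
      rw [le_div_iff₀ hLP0] at hy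
      nlinarith
    have hN : 0 < y ⬝ᵥ y + 1 := by linarith [hyy y]
    have hm : 0 < Mnorm M (Q *ᵥ y + q) := by
      rw [Mnorm, hzM]; exact Real.sqrt_pos.mpr hN
    have hm2 : Mnorm M (Q *ᵥ y + q) * Mnorm M (Q *ᵥ y + q) = y ⬝ᵥ y + 1 := by
      rw [Mnorm, hzM]; exact Real.mul_self_sqrt hN.le
    set s := Mnorm M (Q *ᵥ y + q) with hs
    have hqz : q ⬝ᵥ (M *ᵥ (s⁻¹ • (Q *ᵥ y + q))) = s⁻¹ := by
      rw [mulVec_smul, dotProduct_smul, mulVec_add, dotProduct_add, hqQ, hq1]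
      simp
    refine ⟨s⁻¹ • (Q *ᵥ y + q), ⟨⟨?_, ?_⟩, ?_⟩, ?_⟩
    · rw [Mnorm, mulVec_smul, dotProduct_smul, smul_dotProduct, hzM, ← hm2]
      simp only [smul_eq_mul]
      rw [Real.sqrt_eq_one]
      field_simp
    · rw [hqz]; positivity
    · rw [← hρq, Rq]
      simp only [mulVec_smul, dotProduct_smul, smul_dotProduct, smul_eq_mul]
      rw [mul_div_mul_left _ _ (by positivity), mul_div_mul_left _ _ (by positivity), hzA, hzM]
      exact hle
    · rw [psiMap, hqz, mulVec_smul, smul_smul, inv_inv, mul_inv_cancel₀ hm.ne', one_smul,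
        mulVec_add, hQMq, add_zero, mulVec_mulVec, hQMQ, one_mulVec]
end
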